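/- arXiv:2505.03922 — 4 statements merged into one kernel-verified Lean document; each statement's English description precedes it below -/
import Mathlib

section
/- Let X be the standard simplex in ℝⁿ and let A : X → ℝ^{n×n} be a continuous map such that for every x ∈ X the matrix A(x) has nonnegative off-diagonal entries and each of its columns sums to zero. Then there exists a point x* ∈ X such that A(x*)·x* = 0, i.e., the state-dependent dynamics ẋ = A(x)x admits an equilibrium in the simplex. -/
/-!
The argument is Scarf's proof of Brouwer's theorem, applied directly to the sets `{x | 0 ≤ v x i}`
of a vector field `v` on the simplex.

Rank the points of a finite subset `T` of the simplex by their coordinates, and add one slack vertex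
per coordinate. The dominant sets of full cardinality (Scarf's primitive sets) behave like the cells
of a triangulation: a facet containing a point of `T` lies in none or two of them, a facet made of
slack vertices only in exactly one. Sperner's parity argument then produces, for every colouring, a
dominant set carrying each colour once. As `T` grows to the whole simplex, an ultrafilter limit of
these sets must shrink to one point, since otherwise some point of the simplex would beat all their
coordinatewise minima.

Colour each point `x` by an index `i` with `0 ≤ v x i`, which exists because the entries of `v x`
sum to zero, and the slack vertex `i` by `i`. Then `0 ≤ v x i` at the limit point `x`: by continuity
if the colour `i` comes from a point, and because `x i = 0` if it comes from the slack vertex. Hence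
`v x = 0`.
-/

open Filter Finset Topology

section Sperner

variable {U ι : Type*} {c : U → ι} {i₀ : ι} {D S : Finset U}

/-- A finite set of vertices coloured by `c` is a rainbow when it carries every colour exactly
once. -/
def IsRainbow (c : U → ι) (S : Finset U) : Prop := Set.BijOn c S Set.univ

/-- A door is a finite set of vertices carrying every colour except `i₀` exactly once. -/
def IsDoor (c : U → ι) (i₀ : ι) (D : Finset U) : Prop := Set.BijOn c D {i₀}ᶜ

lemma IsDoor.card_add_one [Fintype ι] (hD : IsDoor c i₀ D) : #D + 1 = Fintype.card ι := by
  classical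
  have hcard : #D = #(univ.erase i₀) :=
    Set.BijOn.finsetCard_eq c (by simpa [IsDoor, Set.compl_eq_univ_sdiff] using hD)
  rw [hcard, card_erase_add_one (mem_univ i₀), card_univ]

lemma IsDoor.isRainbow_insert [DecidableEq U] {x : U} (hD : IsDoor c (c x) D) :
    IsRainbow c (insert x D) := by
  simpa [IsRainbow, ← Set.union_singleton] using Set.BijOn.insert (a := x) hD (by simp)

lemma IsDoor.insert_erase [DecidableEq U] {x y : U} (hD : IsDoor c i₀ D) (hy : y ∈ D)
    (hxy : c y = c x) : IsDoor c i₀ (insert x (D.erase y)) := by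
  have hcy : c y ≠ i₀ := hD.mapsTo hy
  simpa [IsDoor, ← hxy, hcy] using (hD.sdiff_singleton hy).insert (a := x) (by simp [hxy])

open Classical in
lemma IsRainbow.filter_powerset_isDoor (hS : IsRainbow c S) (i₀ : ι) :
    S.powerset.filter (IsDoor c i₀) = {S.filter (c · ≠ i₀)} := by
  ext D
  simp only [mem_filter, mem_powerset, mem_singleton]
  constructor
  · rintro ⟨hDS, hD⟩
    ext x
    refine ⟨fun hx => mem_filter.2 ⟨hDS hx, hD.mapsTo hx⟩, fun hx => ?_⟩
    obtain ⟨hxS, hcx⟩ := mem_filter.1 hx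
    obtain ⟨d, hd, hdx⟩ := hD.surjOn hcx
    exact hS.injOn (hDS hd) hxS hdx ▸ hd
  · rintro rfl
    refine ⟨filter_subset _ _, fun x hx => (mem_filter.1 hx).2,
      hS.injOn.mono (filter_subset _ _), fun i hi => ?_⟩
    obtain ⟨x, hx, rfl⟩ := hS.surjOn (Set.mem_univ i)
    exact ⟨x, mem_filter.2 ⟨hx, hi⟩, rfl⟩

open Classical in
lemma IsDoor.filter_powerset_insert_isDoor [Finite ι] {x y : U} (hD : IsDoor c i₀ D) (hx : x ∉ D)
    (hy : y ∈ D) (hxy : c y = c x) :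
    (insert x D).powerset.filter (IsDoor c i₀) = {D, insert x (D.erase y)} := by
  have := Fintype.ofFinite ι
  have hswap := hD.insert_erase hy hxy
  ext E
  simp only [mem_filter, mem_powerset, mem_insert, mem_singleton]
  constructor
  · rintro ⟨hES, hE⟩
    have hcard {E' : Finset U} (hE' : IsDoor c i₀ E') : #E' ≤ #E :=
      Nat.le_of_add_le_add_right (hE'.card_add_one.trans hE.card_add_one.symm).le
    by_cases hxE : x ∈ E
    · have hyE : y ∉ E := fun h => hx (hE.injOn h hxE hxy ▸ hy)
      exact .inr (eq_of_subset_of_card_le (by grind) (hcard hswap))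
    · exact .inl (eq_of_subset_of_card_le ((subset_insert_iff_of_notMem hxE).1 hES) (hcard hD))
  · rintro (rfl | rfl)
    · exact ⟨subset_insert _ _, hD⟩
    · exact ⟨insert_subset_insert _ (erase_subset _ _), hswap⟩

open Classical in
lemma odd_card_filter_isDoor_iff_isRainbow [Fintype ι] (hS : #S = Fintype.card ι) :
    Odd #(S.powerset.filter (IsDoor c i₀)) ↔ IsRainbow c S := by
  refine ⟨fun hodd => ?_, fun hrainbow => by simp [hrainbow.filter_powerset_isDoor]⟩
  by_contra hrainbow
  obtain ⟨D, hDmem⟩ := card_pos.1 hodd.pos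
  obtain ⟨hDS, hD⟩ := mem_filter.1 hDmem
  obtain ⟨x, hx, rfl⟩ := exists_eq_insert_iff.2
    ⟨mem_powerset.1 hDS, hD.card_add_one.trans hS.symm⟩
  have hcx : c x ≠ i₀ := fun h => hrainbow (h ▸ hD).isRainbow_insert
  obtain ⟨y, hy, hxy⟩ := hD.surjOn hcx
  have hne : D ≠ insert x (D.erase y) := fun h => hx (h ▸ mem_insert_self _ _)
  rw [hD.filter_powerset_insert_isDoor hx hy hxy, card_pair hne] at hodd
  exact absurd hodd (by decide)

open Classical in
theorem IsDoor.odd_card_filter_isRainbow [DecidableEq U] [Finite U] [Fintype ι]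
    {F : Finset (Finset U)} (hF : ∀ S ∈ F, #S = Fintype.card ι) (hD : IsDoor c i₀ D)
    (hodd : Odd #{S ∈ F | D ⊆ S})
    (heven : ∀ E, IsDoor c i₀ E → E ≠ D → Even #{S ∈ F | E ⊆ S}) :
    Odd #(F.filter (IsRainbow c)) := by
  have := Fintype.ofFinite U
  have hcells : {E ∈ univ.filter (IsDoor c i₀) | Odd #{S ∈ F | E ⊆ S}} = {D} := by
    ext E
    simp only [mem_filter, mem_univ, true_and, mem_singleton]
    refine ⟨fun ⟨hE, hoddE⟩ => ?_, fun h => h ▸ ⟨hD, hodd⟩⟩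
    by_contra hne
    exact Nat.not_even_iff_odd.2 hoddE (heven E hE hne)
  have hdoors : ∀ S ∈ F, Odd #{E ∈ univ.filter (IsDoor c i₀) | E ⊆ S} ↔ IsRainbow c S := by
    intro S hS
    have hpowerset : {E ∈ univ.filter (IsDoor c i₀) | E ⊆ S} = S.powerset.filter (IsDoor c i₀) := by
      ext E
      simp only [mem_filter, mem_univ, true_and, mem_powerset, and_comm]
    rw [hpowerset, odd_card_filter_isDoor_iff_isRainbow (hF S hS)]
  have hcount : ∑ S ∈ F, #{E ∈ univ.filter (IsDoor c i₀) | E ⊆ S} =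
      ∑ E ∈ univ.filter (IsDoor c i₀), #{S ∈ F | E ⊆ S} := by
    simp only [card_filter]
    exact sum_comm
  rw [← filter_congr hdoors, ← odd_sum_iff_odd_card_odd, hcount, odd_sum_iff_odd_card_odd,
    hcells, card_singleton]
  exact odd_one

end Sperner

section Dominance

variable {U ι α : Type*} [LinearOrder α] {ρ : ι → U → α} {D S : Finset U} {i j k : ι}
  {x y : U}

/-- `S` is dominant for the rankings `ρ i` when no vertex lies strictly above the `ρ i`-minimum
of `S` for every `i` simultaneously. These are Scarf's primitive sets. -/
def IsDominant (ρ : ι → U → α) (S : Finset U) : Prop := ∀ z, ∃ i, ∀ x ∈ S, ρ i z ≤ ρ i x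

/-- The vertices that may replace the `ρ j`-minimum when a dominant set is pivoted around `D`:
those strictly above the `ρ i`-minimum of `D` for every `i ≠ j`. -/
def aboveExcept (ρ : ι → U → α) (D : Finset U) (j : ι) : Set U :=
  {y | ∀ i ≠ j, ∃ d ∈ D, ρ i d < ρ i y}

/-- `y` is a pivot of `D` in direction `j` when it is `ρ j`-maximal in `aboveExcept ρ D j`. -/
def IsPivot (ρ : ι → U → α) (D : Finset U) (j : ι) (y : U) : Prop :=
  y ∈ aboveExcept ρ D j ∧ ∀ z ∈ aboveExcept ρ D j, ρ j z ≤ ρ j y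

lemma IsDominant.mono (hS : IsDominant ρ S) (hDS : D ⊆ S) : IsDominant ρ D := fun z =>
  (hS z).imp fun _ hi x hx => hi x (hDS hx)

lemma IsDominant.le_of_mem_aboveExcept (hD : IsDominant ρ D) (hy : y ∈ aboveExcept ρ D j) :
    ∀ d ∈ D, ρ j y ≤ ρ j d := by
  obtain ⟨i, hi⟩ := hD y
  obtain rfl : i = j := by
    by_contra hij
    obtain ⟨d, hd, hlt⟩ := hy i hij
    exact (hi d hd).not_gt hlt
  exact hi

lemma exists_isPivot [Finite U] (h : (aboveExcept ρ D j).Nonempty) : ∃ y, IsPivot ρ D j y :=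
  Set.exists_max_image _ (ρ j) (Set.toFinite _) h

lemma IsPivot.eq (hρ : Function.Injective (ρ j)) (hx : IsPivot ρ D j x) (hy : IsPivot ρ D j y) :
    x = y :=
  hρ (le_antisymm (hy.2 x hx.1) (hx.2 y hy.1))

lemma IsPivot.isDominant_insert [DecidableEq U] (hy : IsPivot ρ D j y) (hD : IsDominant ρ D) :
    IsDominant ρ (insert y D) := by
  intro z
  by_contra! hz
  have hzmem : z ∈ aboveExcept ρ D j := fun i hi => by
    obtain ⟨x, hx, hxz⟩ := hz i
    obtain rfl | hxD := mem_insert.1 hx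
    · obtain ⟨d, hd, hdx⟩ := hy.1 i hi
      exact ⟨d, hd, hdx.trans hxz⟩
    · exact ⟨x, hxD, hxz⟩
  obtain ⟨x, hx, hxz⟩ := hz j
  obtain rfl | hxD := mem_insert.1 hx
  · exact hxz.not_ge (hy.2 z hzmem)
  · exact hxz.not_ge (hD.le_of_mem_aboveExcept hzmem x hxD)

lemma IsDominant.notMem_of_mem_aboveExcept (hD : IsDominant ρ D) (hρ : Function.Injective (ρ j))
    (hkj : k ≠ j) (hxD : x ∈ D) (hxj : ∀ d ∈ D, ρ j x ≤ ρ j d) (hxk : ∀ d ∈ D, ρ k x ≤ ρ k d)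
    (hy : y ∈ aboveExcept ρ D j) : y ∉ D := by
  intro hyD
  obtain rfl : y = x := hρ (le_antisymm (hD.le_of_mem_aboveExcept hy x hxD) (hxj y hyD))
  obtain ⟨d, hd, hdy⟩ := hy k hkj
  exact hdy.not_ge (hxk d hd)

lemma IsDominant.index_eq_of_card_eq [Fintype ι] (hS : IsDominant ρ S)
    (hρ : ∀ i, Function.Injective (ρ i)) (hcard : #S = Fintype.card ι) (hx : x ∈ S)
    (hi : ∀ d ∈ S, ρ i x ≤ ρ i d) (hj : ∀ d ∈ S, ρ j x ≤ ρ j d) : i = j := by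
  choose g hg using fun z : S => hS z
  have hmin_unique (w : S) {k : ι} (hwk : g w = k) (hk : ∀ d ∈ S, ρ k x ≤ ρ k d) :
      w = ⟨x, hx⟩ :=
    Subtype.ext (hρ k (le_antisymm (hwk ▸ hg w x hx) (hk w w.2)))
  have hginj : Function.Injective g := fun v w hvw =>
    Subtype.ext (hρ (g v) (le_antisymm (hg v w w.2) (hvw ▸ hg w v v.2)))
  have hgsurj : Function.Surjective g :=
    ((Fintype.bijective_iff_injective_and_card g).2 ⟨hginj, by simpa using hcard⟩).2
  obtain ⟨v, hv⟩ := hgsurj i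
  obtain ⟨w, hw⟩ := hgsurj j
  rw [← hv, ← hw, hmin_unique v hv hi, hmin_unique w hw hj]

lemma IsDominant.exists_isPivot_of_insert [DecidableEq U] [Fintype ι]
    (hS : IsDominant ρ (insert y D)) (hρ : ∀ i, Function.Injective (ρ i))
    (hcard : #D + 1 = Fintype.card ι) (hy : y ∉ D) : ∃ j, IsPivot ρ D j y := by
  obtain ⟨j, hj⟩ := hS y
  have hymem : y ∈ aboveExcept ρ D j := fun i hij => by
    by_contra! hle
    have hymin : ∀ d ∈ insert y D, ρ i y ≤ ρ i d := by
      simpa using hle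
    exact hij (hS.index_eq_of_card_eq hρ (by rw [card_insert_of_notMem hy, hcard])
      (mem_insert_self y D) hymin hj)
  refine ⟨j, hymem, fun z hz => ?_⟩
  obtain ⟨i, hi⟩ := hS z
  obtain rfl : i = j := by
    by_contra hij
    obtain ⟨d, hd, hdz⟩ := hz i hij
    exact hdz.not_ge (hi d (mem_insert_of_mem hd))
  exact hi y (mem_insert_self y D)

lemma IsDominant.eq_or_eq_of_isPivot_of_insert [DecidableEq U] [Fintype ι]
    (hS : IsDominant ρ (insert y D)) (hρ : ∀ i, Function.Injective (ρ i))
    (hcard : #D + 1 = Fintype.card ι) (hyD : y ∉ D) (hy : IsPivot ρ D k y) (hij : i ≠ j)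
    (hxD : x ∈ D) (hi : ∀ d ∈ D, ρ i x ≤ ρ i d) (hj : ∀ d ∈ D, ρ j x ≤ ρ j d) :
    k = i ∨ k = j := by
  by_contra! hk
  have hmin {l : ι} (hkl : k ≠ l) (hl : ∀ d ∈ D, ρ l x ≤ ρ l d) :
      ∀ d ∈ insert y D, ρ l x ≤ ρ l d := by
    obtain ⟨d, hd, hdy⟩ := hy.1 l hkl.symm
    simpa using ⟨(hl d hd).trans hdy.le, hl⟩
  exact hij (hS.index_eq_of_card_eq hρ (by rw [card_insert_of_notMem hyD, hcard])
    (mem_insert_of_mem hxD) (hmin hk.1 hi) (hmin hk.2 hj))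

lemma exists_ne_common_argmin [Fintype ι] (ρ : ι → U → α) (hD : D.Nonempty)
    (hcard : #D < Fintype.card ι) :
    ∃ i j, i ≠ j ∧ ∃ x ∈ D, (∀ d ∈ D, ρ i x ≤ ρ i d) ∧ ∀ d ∈ D, ρ j x ≤ ρ j d := by
  choose a haD hamin using fun i => exists_min_image D (ρ i) hD
  obtain ⟨i, -, j, -, hij, haij⟩ := exists_ne_map_eq_of_card_lt_of_maps_to
    (s := univ) (t := D) (by simpa using hcard) fun i _ => haD i
  exact ⟨i, j, hij, a i, haD i, hamin i, haij ▸ hamin j⟩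

open Classical in
/-- The dominant sets that play the role of full-dimensional simplices of a triangulation. -/
noncomputable def dominantCells [Fintype U] [Fintype ι] (ρ : ι → U → α) : Finset (Finset U) :=
  {S | #S = Fintype.card ι ∧ IsDominant ρ S}

lemma mem_dominantCells [Fintype U] [Fintype ι] :
    S ∈ dominantCells ρ ↔ #S = Fintype.card ι ∧ IsDominant ρ S := by
  simp [dominantCells]

lemma mem_dominantCells_and_subset_iff [Fintype U] [Fintype ι] [DecidableEq U]
    (hcard : #D + 1 = Fintype.card ι) :
    S ∈ dominantCells ρ ∧ D ⊆ S ↔ ∃ y ∉ D, IsDominant ρ (insert y D) ∧ insert y D = S := by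
  rw [mem_dominantCells]
  constructor
  · rintro ⟨⟨hS, hdom⟩, hDS⟩
    obtain ⟨y, hy, rfl⟩ := exists_eq_insert_iff.2 ⟨hDS, hcard.trans hS.symm⟩
    exact ⟨y, hy, hdom, rfl⟩
  · rintro ⟨y, hy, hdom, rfl⟩
    exact ⟨⟨by rw [card_insert_of_notMem hy, hcard], hdom⟩, subset_insert y D⟩

lemma IsDominant.card_filter_dominantCells_eq_two [DecidableEq U] [Fintype U] [Fintype ι]
    (hD : IsDominant ρ D) (hρ : ∀ i, Function.Injective (ρ i))
    (hcard : #D + 1 = Fintype.card ι) (hne : D.Nonempty)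
    (habove : ∀ j, (aboveExcept ρ D j).Nonempty) :
    #{S ∈ dominantCells ρ | D ⊆ S} = 2 := by
  -- `D` has one vertex fewer than there are rankings, so two of its minima are the same vertex `x`;
  -- a vertex completing `D` has to take over one of these two.
  obtain ⟨i, j, hij, x, hxD, hi, hj⟩ := exists_ne_common_argmin ρ hne (by omega)
  obtain ⟨y, hy⟩ := exists_isPivot (habove i)
  obtain ⟨z, hz⟩ := exists_isPivot (habove j)
  have hyD : y ∉ D := hD.notMem_of_mem_aboveExcept (hρ i) hij.symm hxD hi hj hy.1
  have hzD : z ∉ D := hD.notMem_of_mem_aboveExcept (hρ j) hij hxD hj hi hz.1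
  have hyz : y ≠ z := by
    rintro rfl
    obtain ⟨d, hd, hdy⟩ := hz.1 i hij
    exact hdy.not_ge (hD.le_of_mem_aboveExcept hy.1 d hd)
  have hcells : {S ∈ dominantCells ρ | D ⊆ S} = {insert y D, insert z D} := by
    ext S
    rw [mem_filter, mem_dominantCells_and_subset_iff hcard, mem_insert, mem_singleton]
    constructor
    · rintro ⟨w, hwD, hdom, rfl⟩
      obtain ⟨k, hw⟩ := hdom.exists_isPivot_of_insert hρ hcard hwD
      obtain rfl | rfl :=
        hdom.eq_or_eq_of_isPivot_of_insert hρ hcard hwD hw hij hxD hi hj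
      · exact .inl (by rw [hw.eq (hρ k) hy])
      · exact .inr (by rw [hw.eq (hρ k) hz])
    · rintro (rfl | rfl)
      · exact ⟨y, hyD, hy.isDominant_insert hD, rfl⟩
      · exact ⟨z, hzD, hz.isDominant_insert hD, rfl⟩
  rw [hcells, card_pair fun h => hyz ((insert_inj hyD).1 h)]

lemma even_card_filter_dominantCells [DecidableEq U] [Fintype U] [Fintype ι]
    (hρ : ∀ i, Function.Injective (ρ i)) (hcard : #D + 1 = Fintype.card ι) (hne : D.Nonempty)
    (habove : ∀ j, (aboveExcept ρ D j).Nonempty) : Even #{S ∈ dominantCells ρ | D ⊆ S} := by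
  by_cases hD : IsDominant ρ D
  · rw [hD.card_filter_dominantCells_eq_two hρ hcard hne habove]
    exact even_two
  · rw [filter_eq_empty_iff.2 fun S hS hDS => hD ((mem_dominantCells.1 hS).2.mono hDS)]
    exact Even.zero

end Dominance

section Scarf

variable {T ι α : Type*} {r : ι → T → α} {c : T → ι} {i j i₀ : ι} {t : T}

open Classical in
/-- Extension of the rankings `r` to the points of `T` and one slack vertex `j` for each index:
`j` is at the bottom of the ranking `j` and at the top of all the others. -/
noncomputable def slackLevel (r : ι → T → α) (i : ι) : T ⊕ ι → WithTop (WithBot α) :=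
  Sum.elim (fun t => (r i t : WithBot α)) fun j => if j = i then (⊥ : WithBot α) else ⊤

/-- The ranking `slackLevel r i` with ties broken by a fixed enumeration of the vertices. -/
noncomputable def slackRank [Fintype T] [Fintype ι] (r : ι → T → α) (i : ι) (u : T ⊕ ι) :
    WithTop (WithBot α) ×ₗ Fin (Fintype.card (T ⊕ ι)) :=
  toLex (slackLevel r i u, Fintype.equivFin (T ⊕ ι) u)

open Classical in
/-- The face spanned by all slack vertices except `i₀`. -/
noncomputable def slackFacet (T : Type*) [Fintype ι] (i₀ : ι) : Finset (T ⊕ ι) :=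
  (univ.erase i₀).map Function.Embedding.inr

@[simp]
lemma inr_mem_slackFacet [Fintype ι] : Sum.inr i ∈ slackFacet T i₀ ↔ i ≠ i₀ := by
  simp [slackFacet]

@[simp]
lemma inl_notMem_slackFacet [Fintype ι] : Sum.inl t ∉ slackFacet T i₀ := by
  simp [slackFacet]

lemma isDoor_slackFacet [Fintype ι] (c : T → ι) (i₀ : ι) :
    IsDoor (Sum.elim c id) i₀ (slackFacet T i₀) := by
  refine ⟨?_, ?_, fun i hi => ⟨Sum.inr i, by simpa using hi, rfl⟩⟩
  · rintro (t | i) <;> simp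
  · rintro (t | i) hi (s | j) hj <;> simp_all

lemma card_slackFacet_add_one [Fintype ι] (i₀ : ι) :
    #(slackFacet T i₀) + 1 = Fintype.card ι := by
  simp [slackFacet, Nat.sub_add_cancel (Fintype.card_pos_iff.2 ⟨i₀⟩)]

lemma exists_inl_mem_of_isDoor [Fintype ι] {D : Finset (T ⊕ ι)}
    (hD : IsDoor (Sum.elim c id) i₀ D) (hne : D ≠ slackFacet T i₀) : ∃ t, Sum.inl t ∈ D := by
  by_contra! hinr
  refine hne (eq_of_subset_of_card_le ?_ ?_)
  · rintro (t | i) hD'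
    · exact absurd hD' (hinr t)
    · exact inr_mem_slackFacet.2 (hD.mapsTo hD')
  · have := hD.card_add_one
    have := card_slackFacet_add_one (T := T) i₀
    omega

variable [Fintype T] [Fintype ι]

lemma slackRank_injective (r : ι → T → α) (i : ι) : Function.Injective (slackRank r i) :=
  fun _ _ h => (Fintype.equivFin _).injective (congrArg (fun p => (ofLex p).2) h)

variable [LinearOrder α]

lemma slackRank_inr_self_lt_inl : slackRank r i (Sum.inr i) < slackRank r i (Sum.inl t) :=
  Prod.Lex.toLex_lt_toLex.2 (.inl (by simp [slackLevel, -WithTop.coe_bot]))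

lemma slackRank_inl_lt_inr (hji : j ≠ i) : slackRank r i (Sum.inl t) < slackRank r i (Sum.inr j) :=
  Prod.Lex.toLex_lt_toLex.2 (.inl (by simp [slackLevel, hji]))

lemma slackRank_inr_self_le (r : ι → T → α) (i : ι) :
    ∀ u, slackRank r i (Sum.inr i) ≤ slackRank r i u
  | Sum.inl _ => slackRank_inr_self_lt_inl.le
  | Sum.inr j => by
    obtain rfl | hji := eq_or_ne j i
    · exact le_rfl
    · exact (Prod.Lex.toLex_lt_toLex.2 (.inl (by simp [slackLevel, hji]))).le

lemma le_of_slackRank_inl_le {s : T} (h : slackRank r i (Sum.inl s) ≤ slackRank r i (Sum.inl t)) :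
    r i s ≤ r i t := by
  have hlevel : slackLevel r i (Sum.inl s) ≤ slackLevel r i (Sum.inl t) :=
    Prod.Lex.monotone_fst _ _ h
  simpa [slackLevel] using hlevel

lemma IsDominant.exists_inr_notMem {S : Finset (T ⊕ ι)} (hS : IsDominant (slackRank r) S) (t : T) :
    ∃ i, Sum.inr i ∉ S ∧ ∀ x, Sum.inl x ∈ S → r i t ≤ r i x := by
  obtain ⟨i, hi⟩ := hS (Sum.inl t)
  exact ⟨i, fun hiS => slackRank_inr_self_lt_inl.not_ge (hi _ hiS),
    fun x hx => le_of_slackRank_inl_le (hi _ hx)⟩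

lemma isDominant_insert_inl_slackFacet_iff [DecidableEq (T ⊕ ι)] :
    IsDominant (slackRank r) (insert (Sum.inl t) (slackFacet T i₀)) ↔
      ∀ s, slackRank r i₀ (Sum.inl s) ≤ slackRank r i₀ (Sum.inl t) := by
  constructor
  · intro hdom s
    obtain ⟨i, hi⟩ := hdom (Sum.inl s)
    obtain rfl : i = i₀ := by
      by_contra hne
      exact slackRank_inr_self_lt_inl.not_ge (hi (Sum.inr i) (by simpa using hne))
    exact hi _ (mem_insert_self _ _)
  · rintro hmax (s | i)
    · refine ⟨i₀, ?_⟩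
      rintro (x | j) hx
      · obtain rfl : x = t := by simpa using hx
        exact hmax s
      · exact (slackRank_inl_lt_inr (by simpa using hx)).le
    · exact ⟨i, fun x _ => slackRank_inr_self_le r i x⟩

lemma card_filter_slackFacet_subset [DecidableEq (T ⊕ ι)] [Nonempty T] (r : ι → T → α) (i₀ : ι) :
    #{S ∈ dominantCells (slackRank r) | slackFacet T i₀ ⊆ S} = 1 := by
  obtain ⟨m, hm⟩ := Finite.exists_max fun t => slackRank r i₀ (Sum.inl t)
  rw [card_eq_one]
  refine ⟨insert (Sum.inl m) (slackFacet T i₀), ?_⟩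
  ext S
  rw [mem_filter, mem_dominantCells_and_subset_iff (card_slackFacet_add_one i₀), mem_singleton]
  constructor
  · rintro ⟨t | i, hnotMem, hdom, rfl⟩
    · have ht := isDominant_insert_inl_slackFacet_iff.1 hdom
      rw [slackRank_injective r i₀ (le_antisymm (hm t) (ht m))]
    · obtain ⟨j, hj, -⟩ := hdom.exists_inr_notMem m
      obtain rfl : i = i₀ := by simpa using hnotMem
      simp [Classical.em] at hj
  · rintro rfl
    exact ⟨Sum.inl m, inl_notMem_slackFacet, isDominant_insert_inl_slackFacet_iff.2 hm, rfl⟩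

lemma even_card_filter_subset_of_inl_mem [DecidableEq (T ⊕ ι)] {D : Finset (T ⊕ ι)}
    (hcard : #D + 1 = Fintype.card ι) (ht : Sum.inl t ∈ D) :
    Even #{S ∈ dominantCells (slackRank r) | D ⊆ S} :=
  even_card_filter_dominantCells (slackRank_injective r) hcard ⟨_, ht⟩ fun j =>
    ⟨Sum.inr j, fun _ hij => ⟨_, ht, slackRank_inl_lt_inr hij.symm⟩⟩

lemma exists_isRainbow_isDominant_slackRank [Nonempty T] (r : ι → T → α) (c : T → ι) :
    ∃ S, IsRainbow (Sum.elim c id) S ∧ IsDominant (slackRank r) S := by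
  classical
  have hodd := (isDoor_slackFacet c (c (Classical.arbitrary T))).odd_card_filter_isRainbow
    (F := dominantCells (slackRank r)) (fun S hS => (mem_dominantCells.1 hS).1)
    (by rw [card_filter_slackFacet_subset]; exact odd_one) fun D hD hne => by
      obtain ⟨t, ht⟩ := exists_inl_mem_of_isDoor hD hne
      exact even_card_filter_subset_of_inl_mem hD.card_add_one ht
  obtain ⟨S, hS⟩ := card_pos.1 hodd.pos
  obtain ⟨hcell, hrainbow⟩ := mem_filter.1 hS
  exact ⟨S, hrainbow, (mem_dominantCells.1 hcell).2⟩

end Scarf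

/-- Scarf's lemma. For `i ∉ C` the point `x i` is some element of the primitive set found, so that
quantifying over all `j` loses nothing. -/
theorem exists_colored_forall_exists_le {T ι α : Type*} [LinearOrder α] [Finite T] [Finite ι]
    [Nonempty T] (r : ι → T → α) (c : T → ι) :
    ∃ (C : Finset ι) (x : ι → T), (∀ i ∈ C, c (x i) = i) ∧
      ∀ z, ∃ i ∈ C, ∀ j, r i z ≤ r i (x j) := by
  classical
  have := Fintype.ofFinite T
  have := Fintype.ofFinite ι
  obtain ⟨S, hrainbow, hdom⟩ := exists_isRainbow_isDominant_slackRank r c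
  have hcolored : ∀ i, Sum.inr i ∉ S → ∃ x, Sum.inl x ∈ S ∧ c x = i := fun i hi => by
    obtain ⟨x | j, hx, rfl⟩ := hrainbow.surjOn (Set.mem_univ i)
    · exact ⟨x, hx, rfl⟩
    · exact absurd hx hi
  have hpoint : ∀ i, ∃ x, Sum.inl x ∈ S ∧ (Sum.inr i ∉ S → c x = i) := fun i => by
    by_cases hi : Sum.inr i ∈ S
    · obtain ⟨j, hj, -⟩ := hdom.exists_inr_notMem (Classical.arbitrary T)
      obtain ⟨x, hx, -⟩ := hcolored j hj
      exact ⟨x, hx, fun h => absurd hi h⟩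
    · obtain ⟨x, hx, hcx⟩ := hcolored i hi
      exact ⟨x, hx, fun _ => hcx⟩
  choose x hxS hxc using hpoint
  refine ⟨univ.filter fun i => Sum.inr i ∉ S, x, fun i hi => hxc i (by simpa using hi), fun z => ?_⟩
  obtain ⟨i, hi, hle⟩ := hdom.exists_inr_notMem z
  exact ⟨i, by simpa using hi, fun j => hle _ (hxS j)⟩

theorem exists_colored_forall_mem_exists_le {X ι α : Type*} [LinearOrder α] [Nonempty X] [Finite ι]
    (r : ι → X → α) (c : X → ι) (T : Finset X) :
    ∃ (C : Finset ι) (x : ι → X), (∀ i ∈ C, c (x i) = i) ∧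
      ∀ z ∈ T, ∃ i ∈ C, ∀ j, r i z ≤ r i (x j) := by
  obtain rfl | ⟨t, ht⟩ := T.eq_empty_or_nonempty
  · exact ⟨∅, fun _ => Classical.arbitrary X, by simp, by simp⟩
  · have : Nonempty T := ⟨t, ht⟩
    obtain ⟨C, x, hc, hle⟩ := exists_colored_forall_exists_le (fun i (z : T) => r i z) fun z => c z
    exact ⟨C, fun i => x i, hc, fun z hz => hle ⟨z, hz⟩⟩

theorem exists_mem_closure_forall_exists_le {X ι α : Type*} [TopologicalSpace X] [CompactSpace X]
    [Nonempty X] [Finite ι] [LinearOrder α] [TopologicalSpace α] [OrderClosedTopology α]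
    {f : ι → X → α} (hf : ∀ i, Continuous (f i)) (c : X → ι) :
    ∃ (C : Finset ι) (y : ι → X), (∀ i ∈ C, y i ∈ closure (c ⁻¹' {i})) ∧
      ∀ z, ∃ i ∈ C, ∀ j, f i z ≤ f i (y j) := by
  choose C x hcolor hle using exists_colored_forall_mem_exists_le f c
  let 𝒰 : Ultrafilter (Finset X) := Ultrafilter.of atTop
  obtain ⟨C₀, hC₀⟩ : ∃ C₀, ∀ᶠ T in 𝒰, C T = C₀ :=
    Ultrafilter.eventually_exists_iff.1 (.of_forall fun T => ⟨C T, rfl⟩)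
  have hlim (j : ι) : Tendsto (x · j) 𝒰 (𝓝 (𝒰.map (x · j)).lim) := (𝒰.map (x · j)).le_nhds_lim
  refine ⟨C₀, fun j => (𝒰.map (x · j)).lim, fun i hi => ?_, fun z => ?_⟩
  · refine mem_closure_of_tendsto (hlim i) (hC₀.mono ?_)
    rintro T rfl
    exact hcolor T i hi
  · have hz : ∀ᶠ T : Finset X in 𝒰, z ∈ T :=
      Ultrafilter.of_le _ ((eventually_ge_atTop {z}).mono fun T hT => singleton_subset_iff.1 hT)
    have hdom : ∀ᶠ T in 𝒰, ∃ i ∈ (C₀ : Set ι), ∀ j, f i z ≤ f i (x T j) := by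
      filter_upwards [hz, hC₀] with T hzT hCT
      exact hCT ▸ hle T z hzT
    obtain ⟨i, hi, hdom_i⟩ := (Ultrafilter.eventually_exists_mem_iff C₀.finite_toSet).1 hdom
    exact ⟨i, hi, fun j =>
      ge_of_tendsto (((hf i).tendsto _).comp (hlim j)) (hdom_i.mono fun T hT => hT j)⟩

section Simplex

variable {ι : Type*} [Fintype ι]

lemma exists_mem_stdSimplex_forall_lt [Nonempty ι] {w : ι → ℝ} (hw : 0 ≤ w)
    (hsum : ∑ i, w i < 1) : ∃ z ∈ stdSimplex ℝ ι, ∀ i, w i < z i := by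
  have hcard : (0 : ℝ) < Fintype.card ι := by exact_mod_cast Fintype.card_pos
  have hgap : 0 < (1 - ∑ i, w i) / Fintype.card ι := div_pos (sub_pos.2 hsum) hcard
  refine ⟨fun i => w i + (1 - ∑ i, w i) / Fintype.card ι,
    ⟨fun i => add_nonneg (hw i) hgap.le, ?_⟩, fun i => lt_add_of_pos_right _ hgap⟩
  rw [sum_add_distrib, sum_const, card_univ, nsmul_eq_mul, mul_div_cancel₀ _ hcard.ne',
    add_sub_cancel]

lemma eq_of_le_of_forall_mem_stdSimplex_exists_le {w y : ι → ℝ}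
    (hy : y ∈ stdSimplex ℝ ι) (hw : 0 ≤ w) (hwy : w ≤ y)
    (h : ∀ z ∈ stdSimplex ℝ ι, ∃ i, z i ≤ w i) : w = y := by
  have : Nonempty ι := (h y hy).nonempty
  by_contra hne
  have hsum : ∑ i, w i < 1 := hy.2 ▸ Fintype.sum_strictMono (lt_of_le_of_ne hwy hne)
  obtain ⟨z, hz, hlt⟩ := exists_mem_stdSimplex_forall_lt hw hsum
  obtain ⟨i, hi⟩ := h z hz
  exact (hlt i).not_ge hi

lemma indicator_inf_eq_left_of_forall_mem_stdSimplex_exists_le {s : Set ι} {a b : ι → ℝ}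
    (ha : a ∈ stdSimplex ℝ ι) (hb : b ∈ stdSimplex ℝ ι)
    (h : ∀ z ∈ stdSimplex ℝ ι, ∃ i ∈ s, z i ≤ (a ⊓ b) i) : s.indicator (a ⊓ b) = a := by
  have hinf : 0 ≤ a ⊓ b := le_inf ha.1 hb.1
  refine eq_of_le_of_forall_mem_stdSimplex_exists_le ha (s.indicator_nonneg fun i _ => hinf i)
    (s.indicator_le' (fun i _ => inf_le_left) fun i _ => ha.1 i) fun z hz => ?_
  obtain ⟨i, hi, hle⟩ := h z hz
  exact ⟨i, by rwa [Set.indicator_of_mem hi]⟩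

/-- The dual form of the Knaster–Kuratowski–Mazurkiewicz lemma. -/
theorem nonempty_iInter_of_facet_subset [Nonempty ι] {F : ι → Set (stdSimplex ℝ ι)}
    (hclosed : ∀ i, IsClosed (F i)) (hcover : ∀ x, ∃ i, x ∈ F i)
    (hfacet : ∀ i, ∀ x : stdSimplex ℝ ι, x i = 0 → x ∈ F i) : (⋂ i, F i).Nonempty := by
  choose c hc using hcover
  obtain ⟨C, y, hyC, hdom⟩ := exists_mem_closure_forall_exists_le
    (f := fun i (x : stdSimplex ℝ ι) => x i)
    (fun i => (continuous_apply i).comp continuous_subtype_val) c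
  have hinf (j k : ι) : (C : Set ι).indicator (⇑(y j) ⊓ ⇑(y k)) = y j :=
    indicator_inf_eq_left_of_forall_mem_stdSimplex_exists_le (y j).2 (y k).2 fun z hz =>
      (hdom ⟨z, hz⟩).imp fun i ⟨hi, hle⟩ => ⟨hi, le_inf (hle j) (hle k)⟩
  have heq (j k : ι) : y j = y k :=
    DFunLike.coe_injective (by rw [← hinf j k, inf_comm, hinf k j])
  obtain ⟨k⟩ := ‹Nonempty ι›
  refine ⟨y k, Set.mem_iInter.2 fun i => ?_⟩
  by_cases hi : i ∈ C
  · rw [heq k i]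
    exact closure_minimal (by rintro x rfl; exact hc x) (hclosed i) (hyC i hi)
  · exact hfacet i _ (by rw [← hinf k k, Set.indicator_of_notMem (by simpa using hi)])

theorem exists_equilibrium_in_stdSimplex_general [Nonempty ι] {v : (ι → ℝ) → ι → ℝ}
    (hv : ContinuousOn v (stdSimplex ℝ ι)) (hsum : ∀ x ∈ stdSimplex ℝ ι, ∑ i, v x i = 0)
    (hfacet : ∀ x ∈ stdSimplex ℝ ι, ∀ i, x i = 0 → 0 ≤ v x i) :
    ∃ x ∈ stdSimplex ℝ ι, v x = 0 := by
  have hcover (x : stdSimplex ℝ ι) : ∃ i, 0 ≤ v x i := by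
    by_contra! hneg
    exact (sum_neg (fun i _ => hneg i) univ_nonempty).ne (hsum x x.2)
  obtain ⟨x, hx⟩ := nonempty_iInter_of_facet_subset
    (F := fun i => {x | 0 ≤ v x i})
    (fun i => isClosed_le continuous_const ((continuous_apply i).comp hv.domRestrict)) hcover
    fun i x hxi => hfacet x x.2 i hxi
  have hnonneg : 0 ≤ v x := Set.mem_iInter.1 hx
  exact ⟨x, x.2, (Fintype.sum_eq_zero_iff_of_nonneg hnonneg).1 (hsum x x.2)⟩

end Simplex

section Matrix

variable {m n R : Type*} [Fintype n]

lemma sum_mulVec_eq_zero_of_sum_col_eq_zero [Fintype m] [NonUnitalNonAssocSemiring R]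
    {M : Matrix m n R} (hcol : ∀ j, ∑ i, M i j = 0) (x : n → R) : ∑ i, M.mulVec x i = 0 := by
  simp only [Matrix.mulVec, dotProduct]
  rw [sum_comm]
  simp only [← sum_mul, hcol, zero_mul, sum_const_zero]

lemma mulVec_nonneg_of_eq_zero [Semiring R] [PartialOrder R] [IsOrderedRing R]
    {M : Matrix n n R} {x : n → R} {i : n} (hoff : ∀ j, i ≠ j → 0 ≤ M i j) (hx : 0 ≤ x)
    (hxi : x i = 0) : 0 ≤ M.mulVec x i :=
  sum_nonneg fun j _ => by
    obtain rfl | hij := eq_or_ne i j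
    · rw [hxi, mul_zero]
    · exact mul_nonneg (hoff j hij) (hx j)

lemma continuousOn_mulVec [NonUnitalNonAssocSemiring R] [TopologicalSpace R] [ContinuousAdd R]
    [ContinuousMul R] {X : Type*} [TopologicalSpace X] {s : Set X} {A : X → Matrix m n R}
    {f : X → n → R} (hA : ContinuousOn A s) (hf : ContinuousOn f s) :
    ContinuousOn (fun x => (A x).mulVec (f x)) s := by
  rw [continuousOn_iff_continuous_domRestrict] at *
  exact hA.matrix_mulVec hf

end Matrix

/-- Existence of an equilibrium of the state-dependent generator dynamics
`ẋ = A(x)x` on the standard simplex: if `A` is continuous on the simplex and,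
for each `x` in the simplex, `A x` has nonnegative off-diagonal entries and
zero column sums, then there is an `x*` in the simplex with `A(x*) x* = 0`. -/
theorem exists_equilibrium_in_stdSimplex
    (n : ℕ) (hn : 0 < n)
    (A : (Fin n → ℝ) → Matrix (Fin n) (Fin n) ℝ)
    (hcont : ContinuousOn A (stdSimplex ℝ (Fin n)))
    (hoff : ∀ x ∈ stdSimplex ℝ (Fin n), ∀ i j, i ≠ j → 0 ≤ A x i j)
    (hcol : ∀ x ∈ stdSimplex ℝ (Fin n), ∀ j, ∑ i, A x i j = 0) :
    ∃ x ∈ stdSimplex ℝ (Fin n), (A x).mulVec x = 0 := by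
  have : Nonempty (Fin n) := Fin.pos_iff_nonempty.1 hn
  exact exists_equilibrium_in_stdSimplex_general (continuousOn_mulVec hcont continuousOn_id)
    (fun x hx => sum_mulVec_eq_zero_of_sum_col_eq_zero (hcol x hx) x)
    fun x hx i hxi => mulVec_nonneg_of_eq_zero (hoff x hx i) hx.1 hxi
end

section
/- Let M₀ and M₁ be real n × n matrices such that for every q ∈ [0,1] the matrix M₀ + q(M₁ − M₀) has nonnegative off-diagonal entries and each of its columns sums to zero, and let q : ℝⁿ → [0,1] be continuous. Then there exists a point x* in the standard simplex of ℝⁿ such that (M₀ + q(x*)(M₁ − M₀))·x* = 0. -/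
/-!
Fix a point `p` of the simplex and `ε > 0`. For a generator matrix `A`, the matrix `ε - A` is
inverse-positive, and `x = ε (ε - A)⁻¹ p` is a point of the simplex with `A x = ε (x - p)`, so it
is an equilibrium of `A` up to an error of size `ε`. Along a curve `A t` of generators this point
moves continuously with `t`, so `t ↦ q (x t)` maps the parameter interval continuously into itself
and has a fixed point by the intermediate value theorem. Hence there are equilibria up to every
`ε > 0`, and compactness of the simplex yields an exact one. Since the dependence on the state goes
through a single scalar, the fixed-point theorem of Brouwer is not needed.
-/

open Matrix Set

/-- Generators of continuous-time Markov chains in the column convention: a distribution is a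
column vector `x`, and it evolves by `dx/dt = A x`. -/
structure IsGeneratorMatrix {ι R : Type*} [Fintype ι] [AddCommMonoid R] [LE R]
    (A : Matrix ι ι R) : Prop where
  offDiag_nonneg : ∀ i j, i ≠ j → 0 ≤ A i j
  sum_col_eq_zero : ∀ j, ∑ i, A i j = 0

/-- The resolvent `(ε - A)⁻¹` of `A`, scaled by `ε`. For a generator it is the column-stochastic
transition matrix of the chain observed at an independent exponential time of rate `ε`.
It is `0` when `ε - A` is singular. -/
noncomputable def scaledResolvent {ι R : Type*} [Fintype ι] [DecidableEq ι] [CommRing R]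
    (ε : R) (A : Matrix ι ι R) : Matrix ι ι R :=
  ε • (ε • 1 - A)⁻¹

namespace IsGeneratorMatrix

variable {ι : Type*} [Fintype ι]

lemma sum_mulVec_eq_zero {R : Type*} [NonUnitalNonAssocSemiring R] [LE R] {A : Matrix ι ι R}
    (hA : IsGeneratorMatrix A) (x : ι → R) : ∑ i, (A *ᵥ x) i = 0 := by
  simp only [mulVec, dotProduct]
  rw [Finset.sum_comm]
  simp only [← Finset.sum_mul, hA.sum_col_eq_zero, zero_mul, Finset.sum_const_zero]

section OrderedGroup

variable {G : Type*} [AddCommGroup G] [PartialOrder G] [IsOrderedAddMonoid G] {A : Matrix ι ι G}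
  {s : Finset ι} {j : ι}

lemma sum_col_nonneg_of_notMem (hA : IsGeneratorMatrix A) (hj : j ∉ s) : 0 ≤ ∑ i ∈ s, A i j :=
  Finset.sum_nonneg fun i hi ↦ hA.offDiag_nonneg i j (ne_of_mem_of_not_mem hi hj)

lemma sum_col_nonpos_of_mem (hA : IsGeneratorMatrix A) (hj : j ∈ s) : ∑ i ∈ s, A i j ≤ 0 := by
  classical
  have hcompl : 0 ≤ ∑ i ∈ sᶜ, A i j := hA.sum_col_nonneg_of_notMem (by simpa using hj)
  have hsplit : ∑ i ∈ s, A i j + ∑ i ∈ sᶜ, A i j = 0 :=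
    (Finset.sum_add_sum_compl s _).trans (hA.sum_col_eq_zero j)
  rw [eq_neg_of_add_eq_zero_left hsplit]
  exact neg_nonpos.mpr hcompl

end OrderedGroup

section OrderedRing

variable {R : Type*} [Ring R] [LinearOrder R] [IsStrictOrderedRing R] {A : Matrix ι ι R}

lemma sum_mulVec_filter_neg_nonneg (hA : IsGeneratorMatrix A) (x : ι → R) :
    0 ≤ ∑ i with x i < 0, (A *ᵥ x) i := by
  simp only [mulVec, dotProduct]
  rw [Finset.sum_comm]
  refine Finset.sum_nonneg fun j _ ↦ ?_
  rw [← Finset.sum_mul]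
  rcases lt_or_ge (x j) 0 with hneg | hnonneg
  · exact mul_nonneg_of_nonpos_of_nonpos (hA.sum_col_nonpos_of_mem (by simpa using hneg)) hneg.le
  · exact mul_nonneg (hA.sum_col_nonneg_of_notMem (by simpa using hnonneg)) hnonneg

variable [DecidableEq ι] {ε : R}

lemma nonneg_of_smul_one_sub_mulVec_nonneg (hA : IsGeneratorMatrix A) (hε : 0 < ε) {x : ι → R}
    (hx : 0 ≤ (ε • 1 - A) *ᵥ x) : 0 ≤ x := by
  -- Sum over the negative coordinates: there `ε x` has negative total, `A x` a nonnegative one.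
  by_contra hx_neg
  obtain ⟨k, hk⟩ : ∃ k, x k < 0 := by simpa [Pi.le_def] using hx_neg
  have hsum_neg : ∑ i with x i < 0, ε * x i < 0 :=
    Finset.sum_neg (fun i hi ↦ mul_neg_of_pos_of_neg hε (Finset.mem_filter.mp hi).2)
      ⟨k, by simpa using hk⟩
  have hsum_le : ∑ i with x i < 0, (A *ᵥ x) i ≤ ∑ i with x i < 0, ε * x i :=
    Finset.sum_le_sum fun i _ ↦ by simpa [sub_mulVec, smul_mulVec] using hx i
  exact ((hA.sum_mulVec_filter_neg_nonneg x).trans hsum_le).not_gt hsum_neg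

lemma injective_smul_one_sub_mulVec (hA : IsGeneratorMatrix A) (hε : 0 < ε) :
    Function.Injective (ε • 1 - A).mulVec := by
  have le_of_eq_image {x y : ι → R} (hxy : (ε • 1 - A) *ᵥ x = (ε • 1 - A) *ᵥ y) : x ≤ y :=
    sub_nonneg.mp (hA.nonneg_of_smul_one_sub_mulVec_nonneg hε (by rw [mulVec_sub, hxy, sub_self]))
  exact fun x y hxy ↦ le_antisymm (le_of_eq_image hxy) (le_of_eq_image hxy.symm)

end OrderedRing

section OrderedField

variable [DecidableEq ι] {K : Type*} [Field K] [LinearOrder K] [IsStrictOrderedRing K]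
  {A : Matrix ι ι K} {ε : K}

lemma isUnit_smul_one_sub (hA : IsGeneratorMatrix A) (hε : 0 < ε) : IsUnit (ε • 1 - A) :=
  mulVec_injective_iff_isUnit.mp (hA.injective_smul_one_sub_mulVec hε)

lemma smul_one_sub_mulVec_scaledResolvent_mulVec (hA : IsGeneratorMatrix A) (hε : 0 < ε)
    (p : ι → K) : (ε • 1 - A) *ᵥ scaledResolvent ε A *ᵥ p = ε • p := by
  have hdet : IsUnit (ε • 1 - A).det := (isUnit_iff_isUnit_det _).mp (hA.isUnit_smul_one_sub hε)
  rw [scaledResolvent, mulVec_mulVec, mul_smul_comm, mul_nonsing_inv _ hdet, smul_mulVec,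
    one_mulVec]

lemma mulVec_scaledResolvent_mulVec (hA : IsGeneratorMatrix A) (hε : 0 < ε) (p : ι → K) :
    A *ᵥ scaledResolvent ε A *ᵥ p = ε • (scaledResolvent ε A *ᵥ p - p) := by
  have h := hA.smul_one_sub_mulVec_scaledResolvent_mulVec hε p
  rw [sub_mulVec, smul_mulVec, one_mulVec] at h
  rw [smul_sub, ← h, sub_sub_cancel]

lemma scaledResolvent_mulVec_mem_stdSimplex (hA : IsGeneratorMatrix A) (hε : 0 < ε) {p : ι → K}
    (hp : p ∈ stdSimplex K ι) : scaledResolvent ε A *ᵥ p ∈ stdSimplex K ι := by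
  constructor
  · refine hA.nonneg_of_smul_one_sub_mulVec_nonneg hε ?_
    rw [hA.smul_one_sub_mulVec_scaledResolvent_mulVec hε]
    exact smul_nonneg hε.le hp.1
  · have hmass : ε * (∑ i, (scaledResolvent ε A *ᵥ p) i - ∑ i, p i) = 0 := by
      rw [← hA.sum_mulVec_eq_zero (scaledResolvent ε A *ᵥ p), hA.mulVec_scaledResolvent_mulVec hε]
      simp only [Pi.smul_apply, Pi.sub_apply, smul_eq_mul, ← Finset.mul_sum,
        Finset.sum_sub_distrib]
    rw [← hp.2]
    exact sub_eq_zero.mp ((mul_eq_zero.mp hmass).resolve_left hε.ne')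

end OrderedField

section Real

variable [DecidableEq ι]

lemma norm_mulVec_scaledResolvent_mulVec_le {A : Matrix ι ι ℝ} (hA : IsGeneratorMatrix A) {ε : ℝ}
    (hε : 0 < ε) {p : ι → ℝ} (hp : p ∈ stdSimplex ℝ ι) :
    ‖A *ᵥ scaledResolvent ε A *ᵥ p‖ ≤ ε := by
  have hdist : dist (scaledResolvent ε A *ᵥ p) p ≤ 1 :=
    (Metric.dist_le_diam_of_mem (bounded_stdSimplex ι)
      (hA.scaledResolvent_mulVec_mem_stdSimplex hε hp) hp).trans diam_stdSimplex_le
  rw [hA.mulVec_scaledResolvent_mulVec hε, norm_smul, Real.norm_of_nonneg hε.le, ← dist_eq_norm]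
  exact mul_le_of_le_one_right hε.le hdist

lemma continuousAt_scaledResolvent {A : Matrix ι ι ℝ} (hA : IsGeneratorMatrix A) {ε : ℝ}
    (hε : 0 < ε) : ContinuousAt (scaledResolvent ε) A := by
  have hdet : (ε • 1 - A).det ≠ 0 :=
    ((isUnit_iff_isUnit_det _).mp (hA.isUnit_smul_one_sub hε)).ne_zero
  have hinv : ContinuousAt Inv.inv (ε • 1 - A) :=
    continuousAt_matrix_inv _ (by simpa only [Ring.inverse_eq_inv'] using continuousAt_inv₀ hdet)
  have hsub : ContinuousAt (fun B : Matrix ι ι ℝ ↦ ε • 1 - B) A := by fun_prop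
  exact (hinv.comp hsub).const_smul ε

end Real

end IsGeneratorMatrix

section Equilibrium

variable {ι α : Type*} [Fintype ι] [ConditionallyCompleteLinearOrder α] [DenselyOrdered α]
  [TopologicalSpace α] [OrderTopology α] {a b : α} {A : α → Matrix ι ι ℝ} {q : (ι → ℝ) → α}

lemma exists_approx_equilibrium {p : ι → ℝ} (hp : p ∈ stdSimplex ℝ ι)
    (hA : ∀ t ∈ Icc a b, IsGeneratorMatrix (A t)) (hA_cont : ContinuousOn A (Icc a b))
    (hq : MapsTo q (stdSimplex ℝ ι) (Icc a b)) (hq_cont : ContinuousOn q (stdSimplex ℝ ι))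
    {ε : ℝ} (hε : 0 < ε) :
    ∃ x ∈ stdSimplex ℝ ι, ‖A (q x) *ᵥ x‖ ≤ ε := by
  classical
  let x : α → ι → ℝ := fun t ↦ scaledResolvent ε (A t) *ᵥ p
  have hx_maps : MapsTo x (Icc a b) (stdSimplex ℝ ι) := fun t ht ↦
    (hA t ht).scaledResolvent_mulVec_mem_stdSimplex hε hp
  have hx_cont : ContinuousOn x (Icc a b) := fun t ht ↦
    (continuous_id.matrix_mulVec continuous_const).continuousAt.comp_continuousWithinAt
      (((hA t ht).continuousAt_scaledResolvent hε).comp_continuousWithinAt (hA_cont t ht))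
  have hab : a ≤ b := (hq hp).1.trans (hq hp).2
  obtain ⟨t, ht, hfix⟩ := exists_mem_Icc_isFixedPt_of_mapsTo
    (hq_cont.comp hx_cont hx_maps) hab (hq.comp hx_maps)
  have hqt : q (x t) = t := hfix
  refine ⟨x t, hx_maps ht, ?_⟩
  rw [hqt]
  exact (hA t ht).norm_mulVec_scaledResolvent_mulVec_le hε hp

theorem exists_equilibrium_polytope_general [Nonempty ι]
    (hA : ∀ t ∈ Icc a b, IsGeneratorMatrix (A t)) (hA_cont : ContinuousOn A (Icc a b))
    (hq : MapsTo q (stdSimplex ℝ ι) (Icc a b)) (hq_cont : ContinuousOn q (stdSimplex ℝ ι)) :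
    ∃ x ∈ stdSimplex ℝ ι, A (q x) *ᵥ x = 0 := by
  classical
  have hp : Pi.single (Classical.arbitrary ι) 1 ∈ stdSimplex ℝ ι := single_mem_stdSimplex ℝ _
  have hF_cont : ContinuousOn (fun x ↦ A (q x) *ᵥ x) (stdSimplex ℝ ι) :=
    (continuous_fst.matrix_mulVec continuous_snd).comp_continuousOn
      ((hA_cont.comp hq_cont hq).prodMk continuousOn_id)
  have hF_closed : IsClosed ((fun x ↦ A (q x) *ᵥ x) '' stdSimplex ℝ ι) :=
    ((isCompact_stdSimplex ℝ ι).image_of_continuousOn hF_cont).isClosed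
  refine hF_closed.closure_subset (Metric.mem_closure_iff.mpr fun ε hε ↦ ?_)
  obtain ⟨x, hx, hx_norm⟩ := exists_approx_equilibrium hp hA hA_cont hq hq_cont (half_pos hε)
  refine ⟨_, mem_image_of_mem _ hx, ?_⟩
  rw [dist_zero_left]
  exact hx_norm.trans_lt (half_lt_self hε)

end Equilibrium

/-- Equilibrium of the leader-dependent polytopic generator dynamics: if
`M₀ + q(M₁ − M₀)` is a generator matrix (nonnegative off-diagonal entries, zero
column sums) for every `q ∈ [0,1]`, and `q : ℝⁿ → [0,1]` is continuous, then
there exists `x*` in the standard simplex with `(M₀ + q(x*)(M₁ − M₀)) x* = 0`. -/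
theorem exists_equilibrium_polytope
    (n : ℕ) (hn : 0 < n)
    (M₀ M₁ : Matrix (Fin n) (Fin n) ℝ)
    (hoff : ∀ q ∈ Set.Icc (0 : ℝ) 1, ∀ i j, i ≠ j → 0 ≤ (M₀ + q • (M₁ - M₀)) i j)
    (hcol : ∀ q ∈ Set.Icc (0 : ℝ) 1, ∀ j, ∑ i, (M₀ + q • (M₁ - M₀)) i j = 0)
    (q : (Fin n → ℝ) → ℝ) (hqcont : Continuous q)
    (hq01 : ∀ x, q x ∈ Set.Icc (0 : ℝ) 1) :
    ∃ x ∈ stdSimplex ℝ (Fin n), (M₀ + q x • (M₁ - M₀)).mulVec x = 0 := by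
  have : Nonempty (Fin n) := ⟨⟨0, hn⟩⟩
  exact exists_equilibrium_polytope_general (A := fun t ↦ M₀ + t • (M₁ - M₀))
    (fun t ht ↦ ⟨hoff t ht, hcol t ht⟩) (by fun_prop) (fun x _ ↦ hq01 x) hqcont.continuousOn
end

section
/- Let M₀, M₁, and P be real n × n matrices with P symmetric positive definite such that M₀ᵀP + P·M₀ and M₁ᵀP + P·M₁ are both negative definite. Then there exists λ > 0 with the following property: for every function q : ℝ → [0,1] and every differentiable z : ℝ → ℝⁿ satisfying z′(t) = (M₀ + q(t)(M₁ − M₀))·z(t) for all t ≥ 0, one has z(t)ᵀP z(t) ≤ e^{−λt} · z(0)ᵀP z(0) for all t ≥ 0. -/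
open scoped Matrix

/-!
Along a trajectory of `ż = A(t) z`, the function `V(z) = zᵀPz` has derivative
`zᵀ(A(t)ᵀP + P A(t))z`. This form is linear in `A(t)`, so an upper bound by `-c V` passes from the
vertices to their convex hull. At the vertices such a bound holds because the quotient of the two
quadratic forms is invariant under scaling `z` and, on the compact unit sphere, bounded away
from zero. Grönwall's inequality turns `V' ≤ -c V` into exponential decay.
-/

/-- The Lyapunov operator `M ↦ MᵀP + PM` attached to `P`. The quadratic form of its value at `M` is
the derivative of `v ↦ vᵀPv` along the linear vector field `v ↦ Mv`. -/
def lyapunovOperator {ι R : Type*} [Fintype ι] [CommSemiring R] (P : Matrix ι ι R) :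
    Matrix ι ι R →ₗ[R] Matrix ι ι R where
  toFun M := Mᵀ * P + P * M
  map_add' M N := by
    rw [Matrix.transpose_add, add_mul, mul_add, add_add_add_comm]
  map_smul' r M := by
    rw [Matrix.transpose_smul, smul_mul_assoc, mul_smul_comm, smul_add, RingHom.id_apply]

section QuadraticForm

variable {ι R : Type*} [Fintype ι] [CommSemiring R]

lemma dotProduct_lyapunovOperator_mulVec (P M : Matrix ι ι R) (v : ι → R) :
    v ⬝ᵥ lyapunovOperator P M *ᵥ v = v ⬝ᵥ P *ᵥ (M *ᵥ v) + (M *ᵥ v) ⬝ᵥ P *ᵥ v := by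
  change v ⬝ᵥ (Mᵀ * P + P * M) *ᵥ v = _
  rw [Matrix.add_mulVec, dotProduct_add, ← Matrix.mulVec_mulVec, ← Matrix.mulVec_mulVec,
    Matrix.dotProduct_mulVec v Mᵀ, Matrix.vecMul_transpose, add_comm]

lemma smul_dotProduct_mulVec_smul (Q : Matrix ι ι R) (r : R) (v : ι → R) :
    (r • v) ⬝ᵥ Q *ᵥ (r • v) = r ^ 2 * (v ⬝ᵥ Q *ᵥ v) := by
  simp only [Matrix.mulVec_smul, dotProduct_smul, smul_dotProduct, smul_eq_mul]
  ring

end QuadraticForm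

section Compactness

variable {ι : Type*} [Fintype ι] {P : Matrix ι ι ℝ}

lemma dotProduct_mulVec_le_of_forall_mem_sphere {Q : Matrix ι ι ℝ} {r : ℝ}
    (h : ∀ u ∈ Metric.sphere (0 : ι → ℝ) 1, u ⬝ᵥ Q *ᵥ u ≤ r * (u ⬝ᵥ P *ᵥ u)) (v : ι → ℝ) :
    v ⬝ᵥ Q *ᵥ v ≤ r * (v ⬝ᵥ P *ᵥ v) := by
  rcases eq_or_ne v 0 with rfl | hv
  · simp
  have hnorm : ‖v‖ ≠ 0 := norm_ne_zero_iff.mpr hv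
  obtain ⟨u, hu, hvu⟩ : ∃ u ∈ Metric.sphere (0 : ι → ℝ) 1, v = ‖v‖ • u :=
    ⟨‖v‖⁻¹ • v, by simp [norm_smul, hnorm], (smul_inv_smul₀ hnorm v).symm⟩
  calc v ⬝ᵥ Q *ᵥ v = ‖v‖ ^ 2 * (u ⬝ᵥ Q *ᵥ u) := by
        rw [← smul_dotProduct_mulVec_smul, ← hvu]
    _ ≤ ‖v‖ ^ 2 * (r * (u ⬝ᵥ P *ᵥ u)) := by gcongr; exact h u hu
    _ = r * (v ⬝ᵥ P *ᵥ v) := by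
        rw [mul_left_comm, ← smul_dotProduct_mulVec_smul, ← hvu]

lemma exists_pos_forall_mem_dotProduct_mulVec_le {K : Set (Matrix ι ι ℝ)} (hK : IsCompact K)
    (hP : ∀ v : ι → ℝ, v ≠ 0 → 0 < v ⬝ᵥ P *ᵥ v)
    (hneg : ∀ N ∈ K, ∀ v : ι → ℝ, v ≠ 0 → v ⬝ᵥ N *ᵥ v < 0) :
    ∃ c : ℝ, 0 < c ∧ ∀ N ∈ K, ∀ v : ι → ℝ, v ⬝ᵥ N *ᵥ v ≤ -c * (v ⬝ᵥ P *ᵥ v) := by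
  have sphere_ne_zero : ∀ u ∈ Metric.sphere (0 : ι → ℝ) 1, u ≠ 0 :=
    fun _ hu => ne_zero_of_mem_unit_sphere ⟨_, hu⟩
  have quotient_continuousOn : ContinuousOn
      (fun x : Matrix ι ι ℝ × (ι → ℝ) => -(x.2 ⬝ᵥ x.1 *ᵥ x.2) / (x.2 ⬝ᵥ P *ᵥ x.2))
      (K ×ˢ Metric.sphere 0 1) :=
    ContinuousOn.div (by fun_prop) (by fun_prop) fun x hx =>
      (hP x.2 (sphere_ne_zero x.2 hx.2)).ne'
  obtain ⟨c, hc, hle⟩ := (hK.prod (isCompact_sphere 0 1)).exists_forall_le' quotient_continuousOn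
    fun x hx => div_pos (neg_pos.mpr (hneg x.1 hx.1 x.2 (sphere_ne_zero x.2 hx.2)))
      (hP x.2 (sphere_ne_zero x.2 hx.2))
  refine ⟨c, hc, fun N hN => dotProduct_mulVec_le_of_forall_mem_sphere fun u hu => ?_⟩
  have hcu := (le_div_iff₀ (hP u (sphere_ne_zero u hu))).mp (hle (N, u) ⟨hN, hu⟩)
  linarith

end Compactness

lemma dotProduct_lyapunovOperator_mulVec_le_of_mem_convexHull {ι : Type*} [Fintype ι]
    {P M : Matrix ι ι ℝ} {K : Set (Matrix ι ι ℝ)} {v : ι → ℝ} {r : ℝ}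
    (hK : ∀ N ∈ K, v ⬝ᵥ lyapunovOperator P N *ᵥ v ≤ r) (hM : M ∈ convexHull ℝ K) :
    v ⬝ᵥ lyapunovOperator P M *ᵥ v ≤ r := by
  have form_isLinear : IsLinearMap ℝ fun N => v ⬝ᵥ lyapunovOperator P N *ᵥ v :=
    { map_add := fun N N' => by rw [map_add, Matrix.add_mulVec, dotProduct_add]
      map_smul := fun a N => by rw [map_smul, Matrix.smul_mulVec, dotProduct_smul] }
  exact convexHull_min hK (convex_halfSpace_le form_isLinear r) hM

lemma hasDerivWithinAt_dotProduct_mulVec_self {ι 𝕜 : Type*} [Fintype ι]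
    [NontriviallyNormedField 𝕜] [CompleteSpace 𝕜] {P M : Matrix ι ι 𝕜} {z : 𝕜 → ι → 𝕜} {s : Set 𝕜}
    {t : 𝕜} (hz : HasDerivWithinAt z (M *ᵥ z t) s t) :
    HasDerivWithinAt (fun τ => z τ ⬝ᵥ P *ᵥ z τ) (z t ⬝ᵥ lyapunovOperator P M *ᵥ z t) s t := by
  rw [dotProduct_lyapunovOperator_mulVec]
  let form := ((dotProductBilin 𝕜 𝕜).compl₂ P.mulVecLin).toContinuousBilinearMap
  exact form.hasDerivWithinAt_of_bilinear hz hz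

lemma le_exp_mul_of_hasDerivWithinAt_le_mul {f f' : ℝ → ℝ} {k a b : ℝ}
    (hab : a ≤ b) (hf : ContinuousOn f (Set.Icc a b))
    (hf' : ∀ t ∈ Set.Ico a b, HasDerivWithinAt f (f' t) (Set.Ici t) t)
    (hle : ∀ t ∈ Set.Ico a b, f' t ≤ k * f t) :
    f b ≤ Real.exp (k * (b - a)) * f a := by
  have gronwall : f b ≤ gronwallBound (f a) k 0 (b - a) :=
    le_gronwallBound_of_liminf_deriv_right_le hf
      (fun t ht _ => (hf' t ht).liminf_right_slope_le) le_rfl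
      (fun t ht => (hle t ht).trans_eq (add_zero _).symm) b (Set.right_mem_Icc.mpr hab)
  rwa [gronwallBound_ε0, mul_comm] at gronwall

theorem global_exponential_stability_polytope_general {ι : Type*} [Fintype ι]
    {P : Matrix ι ι ℝ} {K : Set (Matrix ι ι ℝ)} (hK : IsCompact K)
    (hP : ∀ v : ι → ℝ, v ≠ 0 → 0 < v ⬝ᵥ P *ᵥ v)
    (hneg : ∀ M ∈ K, ∀ v : ι → ℝ, v ≠ 0 → v ⬝ᵥ lyapunovOperator P M *ᵥ v < 0) :
    ∃ c : ℝ, 0 < c ∧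
      ∀ A : ℝ → Matrix ι ι ℝ, (∀ t, 0 ≤ t → A t ∈ convexHull ℝ K) →
      ∀ z : ℝ → ι → ℝ, ContinuousOn z (Set.Ici 0) →
      (∀ t, 0 ≤ t → HasDerivWithinAt z (A t *ᵥ z t) (Set.Ici t) t) →
      ∀ t, 0 ≤ t → z t ⬝ᵥ P *ᵥ z t ≤ Real.exp (-c * t) * (z 0 ⬝ᵥ P *ᵥ z 0) := by
  have image_isCompact : IsCompact (lyapunovOperator P '' K) :=
    hK.image (lyapunovOperator P).continuous_of_finiteDimensional
  obtain ⟨c, hc, hrate⟩ :=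
    exists_pos_forall_mem_dotProduct_mulVec_le image_isCompact hP (Set.forall_mem_image.mpr hneg)
  refine ⟨c, hc, fun A hA z hz hode t ht => ?_⟩
  have decay : ∀ s, 0 ≤ s →
      z s ⬝ᵥ lyapunovOperator P (A s) *ᵥ z s ≤ -c * (z s ⬝ᵥ P *ᵥ z s) := fun s hs =>
    dotProduct_lyapunovOperator_mulVec_le_of_mem_convexHull
      (fun M hM => hrate _ (Set.mem_image_of_mem _ hM) (z s)) (hA s hs)
  have V_continuousOn : ContinuousOn (fun s => z s ⬝ᵥ P *ᵥ z s) (Set.Icc 0 t) := by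
    have := hz.mono (Set.Icc_subset_Ici_self : Set.Icc 0 t ⊆ Set.Ici 0)
    fun_prop
  simpa only [sub_zero] using le_exp_mul_of_hasDerivWithinAt_le_mul ht V_continuousOn
    (fun s hs => hasDerivWithinAt_dotProduct_mulVec_self (hode s hs.1)) (fun s hs => decay s hs.1)

/-- Global exponential stability via a common quadratic Lyapunov function: if
`P` is symmetric positive definite and `M₀ᵀP + PM₀`, `M₁ᵀP + PM₁` are negative
definite, then there is a decay rate `lam > 0` such that along every trajectory
of the time-varying polytopic system `ż = (M₀ + q(t)(M₁ − M₀)) z`, with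
`q(t) ∈ [0,1]`, the Lyapunov function `V(z) = zᵀPz` satisfies
`V(z(t)) ≤ e^{−lam t} V(z(0))` for all `t ≥ 0`. -/
theorem global_exponential_stability_polytope
    (n : ℕ) (M₀ M₁ P : Matrix (Fin n) (Fin n) ℝ)
    (hPsymm : P.IsSymm)
    (hPpos : ∀ v : Fin n → ℝ, v ≠ 0 → 0 < v ⬝ᵥ P.mulVec v)
    (h0 : ∀ v : Fin n → ℝ, v ≠ 0 → v ⬝ᵥ (M₀ᵀ * P + P * M₀).mulVec v < 0)
    (h1 : ∀ v : Fin n → ℝ, v ≠ 0 → v ⬝ᵥ (M₁ᵀ * P + P * M₁).mulVec v < 0) :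
    ∃ lam : ℝ, 0 < lam ∧
      ∀ q : ℝ → ℝ, (∀ t, q t ∈ Set.Icc (0 : ℝ) 1) →
      ∀ z : ℝ → Fin n → ℝ, Differentiable ℝ z →
      (∀ t, 0 ≤ t → deriv z t = (M₀ + q t • (M₁ - M₀)).mulVec (z t)) →
      ∀ t, 0 ≤ t →
        z t ⬝ᵥ P.mulVec (z t) ≤ Real.exp (-lam * t) * (z 0 ⬝ᵥ P.mulVec (z 0)) := by
  obtain ⟨c, hc, hdecay⟩ := global_exponential_stability_polytope_general
    (Set.toFinite {M₀, M₁}).isCompact hPpos (by rintro M (rfl | rfl); exacts [h0, h1])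
  exact ⟨c, hc, fun q hq z hz hode => hdecay _
    (fun t _ => (convex_convexHull ℝ _).add_smul_sub_mem (subset_convexHull ℝ _ (.inl rfl))
      (subset_convexHull ℝ _ (.inr rfl)) (hq t))
    z hz.continuous.continuousOn fun t ht => hode t ht ▸ (hz t).hasDerivAt.hasDerivWithinAt⟩
end

section
/- Let A : ℝⁿ → ℝ^{n×n} be a continuous map such that for every y ∈ ℝⁿ the matrix A(y) has nonnegative off-diagonal entries and each of its columns sums to zero, and let x : ℝ → ℝⁿ be a differentiable function satisfying x′(t) = A(x(t))·x(t) for all t ≥ 0. If x(0) lies in the standard simplex of ℝⁿ, then x(t) lies in the standard simplex for all t ≥ 0. -/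
/-!
An Euler step `v ↦ (1 + h • Q) *ᵥ v` with a generator `Q` and a small `h > 0` is given by a column
stochastic matrix, hence does not increase the `ℓ¹` norm. Therefore the upper right derivative of
the `ℓ¹` norm along a solution of `x' = Q x` is nonpositive and this norm cannot grow, while the sum
of the coordinates is constant. A vector of sum `1` lies in the simplex exactly when its `ℓ¹` norm
is at most `1`.
-/

open Filter Matrix Set Topology

section NormAlongCurve

variable {E : Type*} [NormedAddCommGroup E] [NormedSpace ℝ E] {f : ℝ → E}

theorem slope_norm_le_of_norm_add_smul_le {v : E} {t z : ℝ} (htz : t < z)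
    (h_euler : ‖f t + (z - t) • v‖ ≤ ‖f t‖) :
    slope (fun u ↦ ‖f u‖) t z ≤ ‖slope f t z - v‖ := by
  have hpos : 0 < z - t := sub_pos.2 htz
  have herror : f z - (f t + (z - t) • v) = (z - t) • (slope f t z - v) := by
    rw [smul_sub, sub_smul_slope, vsub_eq_sub, sub_sub]
  rw [slope_def_field, div_le_iff₀ hpos]
  calc ‖f z‖ - ‖f t‖ ≤ ‖f z‖ - ‖f t + (z - t) • v‖ := sub_le_sub_left h_euler _
    _ ≤ ‖f z - (f t + (z - t) • v)‖ := norm_sub_norm_le _ _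
    _ = ‖slope f t z - v‖ * (z - t) := by
      rw [herror, norm_smul, Real.norm_of_nonneg hpos.le, mul_comm]

theorem frequently_slope_norm_lt_of_frequently_norm_add_smul_le {f' : E} {t r : ℝ}
    (hf : HasDerivWithinAt f f' (Ici t) t)
    (h_euler : ∃ᶠ z in 𝓝[>] t, ‖f t + (z - t) • f'‖ ≤ ‖f t‖) (hr : 0 < r) :
    ∃ᶠ z in 𝓝[>] t, slope (fun u ↦ ‖f u‖) t z < r := by
  have hslope : Tendsto (fun z ↦ ‖slope f t z - f'‖) (𝓝[>] t) (𝓝 0) :=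
    tendsto_iff_norm_sub_tendsto_zero.1 <|
      (hasDerivWithinAt_iff_tendsto_slope' self_notMem_Ioi).1 hf.Ioi_of_Ici
  refine (h_euler.and_eventually
    ((hslope.eventually_lt_const hr).and self_mem_nhdsWithin)).mono ?_
  rintro z ⟨hz, hlt, htz⟩
  exact (slope_norm_le_of_norm_add_smul_le htz hz).trans_lt hlt

theorem norm_le_norm_left_of_frequently_norm_add_smul_le {f' : ℝ → E} {a b : ℝ}
    (hf : ContinuousOn f (Icc a b)) (hf' : ∀ t ∈ Ico a b, HasDerivWithinAt f (f' t) (Ici t) t)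
    (h_euler : ∀ t ∈ Ico a b, ∃ᶠ z in 𝓝[>] t, ‖f t + (z - t) • f' t‖ ≤ ‖f t‖) :
    ∀ t ∈ Icc a b, ‖f t‖ ≤ ‖f a‖ :=
  image_le_of_liminf_slope_right_le_deriv_boundary hf.norm le_rfl continuousOn_const
    (fun t _ ↦ hasDerivWithinAt_const t (Ici t) ‖f a‖) fun t ht _ ↦
      frequently_slope_norm_lt_of_frequently_norm_add_smul_le (hf' t ht) (h_euler t ht)

end NormAlongCurve

variable {ι : Type*} [Fintype ι]

theorem mem_stdSimplex_of_sum_eq_one_of_sum_abs_le_one {R : Type*} [Ring R] [LinearOrder R]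
    [IsOrderedAddMonoid R] {v : ι → R} (hsum : ∑ i, v i = 1) (habs : ∑ i, |v i| ≤ 1) :
    v ∈ stdSimplex R ι := by
  have hle : ∑ i, |v i| ≤ ∑ i, v i := habs.trans_eq hsum.symm
  have heq : ∀ i ∈ Finset.univ, v i = |v i| :=
    (Finset.sum_eq_sum_iff_of_le fun i _ ↦ le_abs_self (v i)).1 <|
      (Finset.sum_le_sum fun i _ ↦ le_abs_self (v i)).antisymm hle
  exact ⟨fun i ↦ abs_eq_self.1 (heq i (Finset.mem_univ i)).symm, hsum⟩

theorem sum_abs_mulVec_le_of_mem_colStochastic {R : Type*} [Ring R] [LinearOrder R]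
    [IsOrderedRing R] [DecidableEq ι] {M : Matrix ι ι R} (hM : M ∈ colStochastic R ι)
    (v : ι → R) : ∑ i, |(M *ᵥ v) i| ≤ ∑ i, |v i| :=
  calc ∑ i, |(M *ᵥ v) i| ≤ ∑ i, (M *ᵥ fun j ↦ |v j|) i := by
        refine Finset.sum_le_sum fun i _ ↦ (Finset.abs_sum_le_sum_abs _ _).trans_eq ?_
        simp only [abs_mul, abs_of_nonneg (nonneg_of_mem_colStochastic hM), mulVec, dotProduct]
    _ = ∑ i, |v i| := sum_mulVec_of_mem_colStochastic hM

/-- Generator matrix of a continuous-time Markov chain on `ι`, in the convention where probability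
distributions are column vectors: `Q i j` is the rate of jumping from `j` to `i`. -/
structure IsMarkovGenerator (Q : Matrix ι ι ℝ) : Prop where
  nonneg_of_ne : ∀ i j, i ≠ j → 0 ≤ Q i j
  sum_col : ∀ j, ∑ i, Q i j = 0

namespace IsMarkovGenerator

variable {Q : Matrix ι ι ℝ}

theorem sum_mulVec (hQ : IsMarkovGenerator Q) (v : ι → ℝ) : ∑ i, (Q *ᵥ v) i = 0 := by
  simp only [mulVec, dotProduct]
  rw [Finset.sum_comm]
  simp only [← Finset.sum_mul, hQ.sum_col, zero_mul, Finset.sum_const_zero]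

theorem eventually_one_add_smul_mem_colStochastic [DecidableEq ι] (hQ : IsMarkovGenerator Q) :
    ∀ᶠ h : ℝ in 𝓝[>] 0, 1 + h • Q ∈ colStochastic ℝ ι := by
  have hdiag : ∀ᶠ h : ℝ in 𝓝[>] 0, ∀ j, 0 < 1 + h * Q j j := by
    refine eventually_all.2 fun j ↦ nhdsWithin_le_nhds ?_
    have hcont : Continuous fun h : ℝ ↦ 1 + h * Q j j := by fun_prop
    exact hcont.continuousAt.eventually_const_lt (by simp)
  filter_upwards [hdiag, self_mem_nhdsWithin] with h hdiag hpos
  refine mem_colStochastic_iff_sum.2 ⟨fun i j ↦ ?_, fun j ↦ ?_⟩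
  · rcases eq_or_ne i j with rfl | hij
    · simpa using (hdiag i).le
    · simpa [one_apply_ne hij] using mul_nonneg (le_of_lt hpos) (hQ.nonneg_of_ne i j hij)
  · simp [Finset.sum_add_distrib, ← Finset.mul_sum, hQ.sum_col, one_apply]

theorem eventually_sum_abs_add_smul_le (hQ : IsMarkovGenerator Q) (v : ι → ℝ) :
    ∀ᶠ h : ℝ in 𝓝[>] 0, ∑ i, |(v + h • Q *ᵥ v) i| ≤ ∑ i, |v i| := by
  classical
  filter_upwards [hQ.eventually_one_add_smul_mem_colStochastic] with h hstoch
  simpa only [add_mulVec, one_mulVec, smul_mulVec] using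
    sum_abs_mulVec_le_of_mem_colStochastic hstoch v

end IsMarkovGenerator

section KolmogorovForwardEquation

variable {Q : ℝ → Matrix ι ι ℝ} {x : ℝ → ι → ℝ} {a b : ℝ}

theorem sum_eq_sum_left_of_hasDerivWithinAt_generator_mulVec
    (hQ : ∀ t ∈ Ico a b, IsMarkovGenerator (Q t)) (hx : ContinuousOn x (Icc a b))
    (hx' : ∀ t ∈ Ico a b, HasDerivWithinAt x (Q t *ᵥ x t) (Ici t) t) :
    ∀ t ∈ Icc a b, ∑ i, x t i = ∑ i, x a i := by
  refine constant_of_has_deriv_right_zero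
    (continuousOn_finsetSum _ fun i _ ↦ continuousOn_pi.1 hx i) fun t ht ↦ ?_
  rw [← (hQ t ht).sum_mulVec (x t)]
  exact HasDerivWithinAt.fun_sum fun i _ ↦ hasDerivWithinAt_pi.1 (hx' t ht) i

theorem sum_abs_le_sum_abs_left_of_hasDerivWithinAt_generator_mulVec
    (hQ : ∀ t ∈ Ico a b, IsMarkovGenerator (Q t)) (hx : ContinuousOn x (Icc a b))
    (hx' : ∀ t ∈ Ico a b, HasDerivWithinAt x (Q t *ᵥ x t) (Ici t) t) :
    ∀ t ∈ Icc a b, ∑ i, |x t i| ≤ ∑ i, |x a i| := by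
  let toL1 : (ι → ℝ) ≃L[ℝ] PiLp 1 fun _ : ι ↦ ℝ := (PiLp.continuousLinearEquiv 1 ℝ _).symm
  have norm_toL1 (v : ι → ℝ) : ‖toL1 v‖ = ∑ i, |v i| := PiLp.norm_eq_of_L1 (toL1 v)
  simp only [← norm_toL1]
  refine norm_le_norm_left_of_frequently_norm_add_smul_le (toL1.continuous.comp_continuousOn hx)
    (fun t ht ↦ toL1.hasFDerivAt.comp_hasDerivWithinAt t (hx' t ht)) fun t ht ↦ ?_
  have hsub : Tendsto (fun z ↦ z - t) (𝓝[>] t) (𝓝[>] 0) := by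
    have hmaps : MapsTo (fun z ↦ z - t) (Ioi t) (Ioi 0) := fun z hz ↦ by simpa using hz
    simpa only [sub_self] using
      ((continuous_sub_right t).continuousWithinAt (x := t)).tendsto_nhdsWithin hmaps
  refine (hsub.eventually ((hQ t ht).eventually_sum_abs_add_smul_le (x t))).frequently.mono
    fun z hz ↦ ?_
  simpa only [← norm_toL1, map_add, map_smul, ContinuousLinearEquiv.coe_coe] using hz

end KolmogorovForwardEquation

theorem stdSimplex_forward_invariant_general {Q : ℝ → Matrix ι ι ℝ} {x : ℝ → ι → ℝ} {a b : ℝ}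
    (hQ : ∀ t ∈ Ico a b, IsMarkovGenerator (Q t)) (hx : ContinuousOn x (Icc a b))
    (hx' : ∀ t ∈ Ico a b, HasDerivWithinAt x (Q t *ᵥ x t) (Ici t) t)
    (ha : x a ∈ stdSimplex ℝ ι) : ∀ t ∈ Icc a b, x t ∈ stdSimplex ℝ ι := by
  intro t ht
  have hsum : ∑ i, x t i = 1 :=
    (sum_eq_sum_left_of_hasDerivWithinAt_generator_mulVec hQ hx hx' t ht).trans ha.2
  have habs : ∑ i, |x t i| ≤ 1 :=
    calc ∑ i, |x t i| ≤ ∑ i, |x a i| :=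
          sum_abs_le_sum_abs_left_of_hasDerivWithinAt_generator_mulVec hQ hx hx' t ht
      _ = ∑ i, x a i := Finset.sum_congr rfl fun i _ ↦ abs_of_nonneg (ha.1 i)
      _ = 1 := ha.2
  exact mem_stdSimplex_of_sum_eq_one_of_sum_abs_le_one hsum habs

/-- Forward invariance of the standard simplex under state-dependent generator
dynamics: if `A` is continuous, and for every `y` the matrix `A(y)` has
nonnegative off-diagonal entries and zero column sums, then any differentiable
solution of `ẋ = A(x)x` (for `t ≥ 0`) starting in the standard simplex stays
in the standard simplex for all `t ≥ 0`. -/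
theorem stdSimplex_forward_invariant
    (n : ℕ)
    (A : (Fin n → ℝ) → Matrix (Fin n) (Fin n) ℝ)
    (hcont : Continuous A)
    (hoff : ∀ y : Fin n → ℝ, ∀ i j, i ≠ j → 0 ≤ A y i j)
    (hcol : ∀ y : Fin n → ℝ, ∀ j, ∑ i, A y i j = 0)
    (x : ℝ → Fin n → ℝ)
    (hdiff : Differentiable ℝ x)
    (hode : ∀ t : ℝ, 0 ≤ t → deriv x t = (A (x t)).mulVec (x t))
    (h0 : x 0 ∈ stdSimplex ℝ (Fin n)) :
    ∀ t : ℝ, 0 ≤ t → x t ∈ stdSimplex ℝ (Fin n) := by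
  intro t ht
  exact stdSimplex_forward_invariant_general (fun s _ ↦ ⟨hoff (x s), hcol (x s)⟩)
    hdiff.continuous.continuousOn (fun s hs ↦ hode s hs.1 ▸ (hdiff s).hasDerivAt.hasDerivWithinAt)
    h0 t (right_mem_Icc.2 ht)
end
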